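/- arXiv:2312.12293 — 2 statements merged into one kernel-verified Lean document; each statement's English description precedes it below -/
import Mathlib

section
/- Let R be a ring (associative, with identity) and let 0 → M_1 → M_2 → M_3 → 0 be a short exact sequence of left R-modules. If any two of the modules M_1, M_2, M_3 are of type FP, then the third one is also of type FP. -/
universe u v

/-- An `R`-module `M` is of type `FP` if it admits a finite-length resolution
`0 → P_n → ⋯ → P_1 → P_0 → M → 0` by finitely generated projective `R`-modules.
(The modules `P_i` for `i > n` are required to be trivial.) -/
def IsFPModule (R : Type u) [Ring R] (M : Type v) [AddCommGroup M] [Module R M] : Prop :=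
  ∃ (n : ℕ) (P : ℕ → ModuleCat.{v} R) (d : ∀ i : ℕ, P (i + 1) →ₗ[R] P i)
    (e : P 0 →ₗ[R] M),
    (∀ i, Module.Projective R (P i)) ∧ (∀ i, Module.Finite R (P i)) ∧
    Function.Surjective e ∧ Function.Exact (d 0) e ∧
    (∀ i, Function.Exact (d (i + 1)) (d i)) ∧ (∀ i, n < i → Subsingleton (P i))

/-- Length-bounded recursive version of type `FP`. -/
def FPD (R : Type u) [Ring R] : ℕ → ∀ (M : Type v) [AddCommGroup M] [Module R M], Prop
  | 0, M, _, _ => Module.Finite R M ∧ Module.Projective R M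
  | n + 1, M, _, _ => ∃ (P : Type v) (_ : AddCommGroup P) (_ : Module R P) (p : P →ₗ[R] M),
      Module.Finite R P ∧ Module.Projective R P ∧ Function.Surjective p ∧
      FPD R n (LinearMap.ker p)

section aux

variable {R : Type u} [Ring R]

theorem FPD.congr {n : ℕ} {M N : Type v} [AddCommGroup M] [Module R M] [AddCommGroup N]
    [Module R N] (e : M ≃ₗ[R] N) (h : FPD R n M) : FPD R n N := by
  cases n with
  | zero =>
    obtain ⟨h1, h2⟩ := h
    exact ⟨Module.Finite.equiv e, Module.Projective.of_equiv e⟩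
  | succ n =>
    obtain ⟨P, _, _, p, h1, h2, h3, h4⟩ := h
    refine ⟨P, _, _, e.toLinearMap ∘ₗ p, h1, h2, e.surjective.comp h3, ?_⟩
    rw [LinearEquiv.ker_comp]
    exact h4

/-- The kernel identification of a short exact sequence. -/
theorem sesEquiv {A B C : Type v} [AddCommGroup A] [Module R A] [AddCommGroup B] [Module R B]
    [AddCommGroup C] [Module R C] (f : A →ₗ[R] B) (g : B →ₗ[R] C)
    (hf : Function.Injective f) (hfg : Function.Exact f g) :
    Nonempty (A ≃ₗ[R] LinearMap.ker g) :=
  ⟨(LinearEquiv.ofInjective f hf).trans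
    (LinearEquiv.ofEq _ _ (LinearMap.exact_iff.1 hfg).symm)⟩

theorem FPD.mk {n : ℕ} {K P M : Type v} [AddCommGroup K] [Module R K] [AddCommGroup P] [Module R P]
    [AddCommGroup M] [Module R M] (i : K →ₗ[R] P) (p : P →ₗ[R] M) (h1 : Module.Finite R P)
    (h2 : Module.Projective R P) (hi : Function.Injective i) (hp : Function.Surjective p)
    (hip : Function.Exact i p) (h : FPD R n K) : FPD R (n + 1) M := by
  obtain ⟨e⟩ := sesEquiv i p hi hip
  exact ⟨P, _, _, p, h1, h2, hp, h.congr e⟩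

theorem FPD.succ {n : ℕ} {M : Type v} [AddCommGroup M] [Module R M] (h : FPD R n M) :
    FPD R (n + 1) M := by
  induction n generalizing M with
  | zero =>
    obtain ⟨h1, h2⟩ := h
    refine FPD.mk (K := PUnit.{v+1}) (0 : PUnit.{v+1} →ₗ[R] M) LinearMap.id h1 h2
      (fun _ _ _ => rfl) Function.surjective_id ?_ ⟨inferInstance, inferInstance⟩
    intro x
    simp [eq_comm]
  | succ n ih =>
    obtain ⟨P, _, _, p, h1, h2, h3, h4⟩ := h
    exact ⟨P, _, _, p, h1, h2, h3, ih h4⟩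

theorem FPD.mono {n m : ℕ} (hnm : n ≤ m) {M : Type v} [AddCommGroup M] [Module R M]
    (h : FPD R n M) : FPD R m M := by
  induction hnm with
  | refl => exact h
  | step _ ih => exact ih.succ

theorem splitEquiv {A B P : Type v} [AddCommGroup A] [Module R A] [AddCommGroup B] [Module R B]
    [AddCommGroup P] [Module R P] [Module.Projective R P] (f : A →ₗ[R] B) (g : B →ₗ[R] P)
    (hf : Function.Injective f) (hg : Function.Surjective g) (hfg : Function.Exact f g) :
    Nonempty ((A × P) ≃ₗ[R] B) := by
  obtain ⟨s, hs⟩ := Module.projective_lifting_property g LinearMap.id hg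
  have hs' : ∀ x, g (s x) = x := fun x => LinearMap.congr_fun hs x
  refine ⟨LinearEquiv.ofBijective (f.coprod s) ⟨?_, ?_⟩⟩
  · rw [injective_iff_map_eq_zero]
    rintro ⟨a, p⟩ h
    simp only [LinearMap.coprod_apply] at h
    have h' := congrArg g h
    rw [map_add, hs', hfg.apply_apply_eq_zero, zero_add, map_zero] at h'
    subst h'
    rw [map_zero, add_zero] at h
    rw [(injective_iff_map_eq_zero f).1 hf a h]
    rfl
  · intro b
    obtain ⟨a, ha⟩ := (hfg (b - s (g b))).1 (by simp [hs'])
    exact ⟨(a, g b), by simp [ha]⟩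

/-- Schanuel-free product step. -/
theorem FPD.prod {n : ℕ} {A P : Type v} [AddCommGroup A] [Module R A]
    [AddCommGroup P] [Module R P] [Module.Finite R P] [Module.Projective R P]
    (h : FPD R n A) : FPD R n (A × P) := by
  cases n with
  | zero =>
    obtain ⟨h1, h2⟩ := h
    exact ⟨inferInstance, inferInstance⟩
  | succ n =>
    obtain ⟨Q, _, _, p, h1, h2, h3, h4⟩ := h
    refine FPD.mk (P := Q × P) (LinearMap.inl R Q P ∘ₗ (LinearMap.ker p).subtype)
      (p.prodMap LinearMap.id) inferInstance inferInstance ?_ ?_ ?_ h4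
    · exact LinearMap.inl_injective.comp Subtype.val_injective
    · exact h3.prodMap Function.surjective_id
    · rintro ⟨x, y⟩
      simp [Prod.ext_iff, eq_comm]

theorem kerComp {P M N : Type v} [AddCommGroup P] [Module R P] [AddCommGroup M] [Module R M]
    [AddCommGroup N] [Module R N] {L : Type v} [AddCommGroup L] [Module R L]
    (p : P →ₗ[R] M) (f : L →ₗ[R] M) (g : M →ₗ[R] N) (hp : Function.Surjective p)
    (hf : Function.Injective f) (hfg : Function.Exact f g) :
    ∃ (i : LinearMap.ker p →ₗ[R] LinearMap.ker (g ∘ₗ p)) (q : LinearMap.ker (g ∘ₗ p) →ₗ[R] L),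
      Function.Injective i ∧ Function.Surjective q ∧ Function.Exact i q := by
  obtain ⟨e⟩ := sesEquiv f g hf hfg
  have hle : LinearMap.ker p ≤ LinearMap.ker (g ∘ₗ p) := by
    intro x hx
    simp only [LinearMap.mem_ker] at hx
    simp [hx]
  let r : LinearMap.ker (g ∘ₗ p) →ₗ[R] LinearMap.ker g :=
    p.restrict (fun x hx => by simpa using hx)
  have hr : ∀ x, (r x : M) = p x := fun x => rfl
  refine ⟨Submodule.inclusion hle, e.symm.toLinearMap ∘ₗ r, Submodule.inclusion_injective hle,
    e.symm.surjective.comp ?_, ?_⟩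
  · rintro ⟨y, hy⟩
    obtain ⟨x, rfl⟩ := hp y
    exact ⟨⟨x, by simpa using hy⟩, rfl⟩
  · intro x
    simp only [LinearMap.comp_apply, LinearEquiv.coe_coe, LinearEquiv.map_eq_zero_iff]
    rw [← Subtype.coe_inj, hr]
    constructor
    · intro h
      exact ⟨⟨x, h⟩, rfl⟩
    · rintro ⟨y, rfl⟩
      exact y.2

theorem FPD.of_prod {n : ℕ} {A P : Type v} [AddCommGroup A] [Module R A]
    [AddCommGroup P] [Module R P] [Module.Finite R P] [Module.Projective R P]
    (h : FPD R n (A × P)) : FPD R n A := by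
  cases n with
  | zero =>
    obtain ⟨h1, h2⟩ := h
    exact ⟨Module.Finite.of_surjective (LinearMap.fst R A P) LinearMap.fst_surjective,
      Module.Projective.of_split (LinearMap.inl R A P) (LinearMap.fst R A P) (by ext; rfl)⟩
  | succ n =>
    obtain ⟨Q, _, _, p, h1, h2, h3, h4⟩ := h
    obtain ⟨i, q, hi, hq, hiq⟩ := kerComp p (LinearMap.inr R A P) (LinearMap.fst R A P) h3
      LinearMap.inr_injective (by rintro ⟨x, y⟩; simp [Prod.ext_iff, eq_comm])
    obtain ⟨e⟩ := splitEquiv i q hi hq hiq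
    exact ⟨Q, _, _, LinearMap.fst R A P ∘ₗ p, h1, h2, (LinearMap.fst_surjective (R := R)).comp h3,
      h4.prod.congr e⟩

theorem FPD.ker {n : ℕ} {P M : Type v} [AddCommGroup P] [Module R P] [AddCommGroup M] [Module R M]
    [Module.Finite R P] [Module.Projective R P] (p : P →ₗ[R] M) (hp : Function.Surjective p)
    (h : FPD R (n + 1) M) : FPD R n (LinearMap.ker p) := by
  obtain ⟨Q, _, _, q, h1, h2, h3, h4⟩ := h
  let X : Submodule R (P × Q) := LinearMap.ker (p.coprod (-q))
  have hX : ∀ x : P × Q, x ∈ X ↔ p x.1 = q x.2 := by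
    intro x
    simp [X, ← sub_eq_add_neg, sub_eq_zero]
  let a : X →ₗ[R] P := LinearMap.fst R P Q ∘ₗ X.subtype
  let b : X →ₗ[R] Q := LinearMap.snd R P Q ∘ₗ X.subtype
  let i : LinearMap.ker p →ₗ[R] X :=
    (LinearMap.inl R P Q ∘ₗ (LinearMap.ker p).subtype).codRestrict X
      (fun x => by rw [hX]; simp)
  let j : LinearMap.ker q →ₗ[R] X :=
    (LinearMap.inr R P Q ∘ₗ (LinearMap.ker q).subtype).codRestrict X
      (fun x => by rw [hX]; simp)
  obtain ⟨e1⟩ := splitEquiv i b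
    (by
      intro x y hxy
      have := congrArg (fun z : X => z.1.1) hxy
      exact Subtype.ext this)
    (by
      intro y
      obtain ⟨x, hx⟩ := hp (q y)
      exact ⟨⟨(x, y), (hX _).2 hx⟩, rfl⟩)
    (by
      rintro ⟨⟨x, y⟩, hxy⟩
      rw [hX] at hxy
      constructor
      · intro h
        change y = 0 at h
        subst h
        exact ⟨⟨x, by simpa using hxy⟩, rfl⟩
      · rintro ⟨z, hz⟩
        exact (congrArg (fun z : X => z.1.2) hz).symm)
  obtain ⟨e2⟩ := splitEquiv j a
    (by
      intro x y hxy
      have := congrArg (fun z : X => z.1.2) hxy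
      exact Subtype.ext this)
    (by
      intro y
      obtain ⟨x, hx⟩ := h3 (p y)
      exact ⟨⟨(y, x), (hX _).2 hx.symm⟩, rfl⟩)
    (by
      rintro ⟨⟨x, y⟩, hxy⟩
      rw [hX] at hxy
      constructor
      · intro h
        change x = 0 at h
        subst h
        exact ⟨⟨y, by simpa using hxy.symm⟩, rfl⟩
      · rintro ⟨z, hz⟩
        exact (congrArg (fun z : X => z.1.1) hz).symm)
  exact (h4.prod.congr (e2.trans e1.symm)).of_prod

theorem FPD.horseshoe {n : ℕ} {M₁ M₂ M₃ : Type v}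
    [AddCommGroup M₁] [Module R M₁] [AddCommGroup M₂] [Module R M₂]
    [AddCommGroup M₃] [Module R M₃]
    (f : M₁ →ₗ[R] M₂) (g : M₂ →ₗ[R] M₃)
    (hf : Function.Injective f) (hg : Function.Surjective g) (hfg : Function.Exact f g)
    (h₁ : FPD R n M₁) (h₃ : FPD R n M₃) : FPD R n M₂ := by
  induction n generalizing M₁ M₂ M₃ with
  | zero =>
    have := h₃.1
    have := h₃.2
    obtain ⟨e⟩ := splitEquiv f g hf hg hfg
    exact h₁.prod.congr e
  | succ n ih =>
    obtain ⟨P, _, _, p, hP1, hP2, hp, hK⟩ := h₁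
    obtain ⟨Q, _, _, q, hQ1, hQ2, hq, hL⟩ := h₃
    obtain ⟨s, hs⟩ := Module.projective_lifting_property g q hg
    have hs' : ∀ x, g (s x) = q x := fun x => LinearMap.congr_fun hs x
    have hgf : ∀ x, g (f x) = 0 := hfg.apply_apply_eq_zero
    let t : P × Q →ₗ[R] M₂ := (f ∘ₗ p).coprod s
    have ht : ∀ x, t x = f (p x.1) + s x.2 := fun x => rfl
    refine ⟨P × Q, _, _, t, inferInstance, inferInstance, ?_, ?_⟩
    · intro y
      obtain ⟨b, hb⟩ := hq (g y)
      obtain ⟨a, ha⟩ := (hfg (y - s b)).1 (by simp [hs', hb])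
      obtain ⟨c, rfl⟩ := hp a
      exact ⟨(c, b), by simp [ht, ha]⟩
    · let i : LinearMap.ker p →ₗ[R] LinearMap.ker t :=
        (LinearMap.inl R P Q ∘ₗ (LinearMap.ker p).subtype).codRestrict _
          (fun x => by rw [LinearMap.mem_ker, ht]; simp)
      let r : LinearMap.ker t →ₗ[R] LinearMap.ker q :=
        (LinearMap.snd R P Q ∘ₗ (LinearMap.ker t).subtype).codRestrict _
          (fun x => by
            have h := x.2
            rw [LinearMap.mem_ker, ht] at h
            have h' := congrArg g h
            rw [map_add, hgf, hs', zero_add, map_zero] at h'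
            exact h')
      refine ih i r ?_ ?_ ?_ hK hL
      · intro x y hxy
        have := congrArg (fun z : LinearMap.ker t => z.1.1) hxy
        exact Subtype.ext this
      · rintro ⟨y, hy⟩
        rw [LinearMap.mem_ker] at hy
        obtain ⟨a, ha⟩ := (hfg (s y)).1 (by rw [hs', hy])
        obtain ⟨c, rfl⟩ := hp a
        exact ⟨⟨(-c, y), by rw [LinearMap.mem_ker, ht]; simp [ha]⟩, rfl⟩
      · rintro ⟨⟨x, y⟩, hxy⟩
        rw [LinearMap.mem_ker, ht] at hxy
        constructor
        · intro h
          have h : y = 0 := congrArg Subtype.val h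
          subst h
          simp only [map_zero, add_zero] at hxy
          exact ⟨⟨x, (injective_iff_map_eq_zero f).1 hf _ hxy⟩, rfl⟩
        · rintro ⟨z, hz⟩
          exact Subtype.ext (congrArg (fun z : LinearMap.ker t => z.1.2) hz).symm

theorem FPD.third {n : ℕ} {M₁ M₂ M₃ : Type v}
    [AddCommGroup M₁] [Module R M₁] [AddCommGroup M₂] [Module R M₂]
    [AddCommGroup M₃] [Module R M₃]
    (f : M₁ →ₗ[R] M₂) (g : M₂ →ₗ[R] M₃)
    (hf : Function.Injective f) (hg : Function.Surjective g) (hfg : Function.Exact f g)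
    (h₁ : FPD R n M₁) (h₂ : FPD R n M₂) : FPD R (n + 1) M₃ := by
  obtain ⟨P, _, _, p, hP1, hP2, hp, hK⟩ := h₂.succ
  obtain ⟨i, q, hi, hq, hiq⟩ := kerComp p f g hp hf hfg
  exact ⟨P, _, _, g ∘ₗ p, hP1, hP2, hg.comp hp, FPD.horseshoe i q hi hq hiq hK h₁⟩

theorem FPD.first {n : ℕ} {M₁ M₂ M₃ : Type v}
    [AddCommGroup M₁] [Module R M₁] [AddCommGroup M₂] [Module R M₂]
    [AddCommGroup M₃] [Module R M₃]
    (f : M₁ →ₗ[R] M₂) (g : M₂ →ₗ[R] M₃)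
    (hf : Function.Injective f) (hg : Function.Surjective g) (hfg : Function.Exact f g)
    (h₂ : FPD R n M₂) (h₃ : FPD R n M₃) : FPD R (n + 1) M₁ := by
  obtain ⟨P, _, _, p, hP1, hP2, hp, hK⟩ := h₂.succ
  obtain ⟨i, q, hi, hq, hiq⟩ := kerComp p f g hp hf hfg
  exact FPD.third i q hi hq hiq hK (FPD.ker (g ∘ₗ p) (hg.comp hp) h₃.succ)

theorem FPD.of_res (n : ℕ) : ∀ {M : Type v} [AddCommGroup M] [Module R M]
    (P : ℕ → ModuleCat.{v} R) (d : ∀ i : ℕ, P (i + 1) →ₗ[R] P i)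
    (e : P 0 →ₗ[R] M),
    (∀ i, Module.Projective R (P i)) → (∀ i, Module.Finite R (P i)) →
    Function.Surjective e → Function.Exact (d 0) e →
    (∀ i, Function.Exact (d (i + 1)) (d i)) → (∀ i, n < i → Subsingleton (P i)) →
    FPD R n M := by
  induction n with
  | zero =>
    intro M _ _ P d e h1 h2 h3 h4 h5 h6
    have := h6 1 (by simp)
    have he : Function.Injective e := by
      rw [injective_iff_map_eq_zero]
      intro x hx
      obtain ⟨y, rfl⟩ := (h4 x).1 hx
      rw [@Subsingleton.elim (P 1) this y 0, map_zero]
    exact FPD.congr (LinearEquiv.ofBijective e ⟨he, h3⟩) ⟨h2 0, h1 0⟩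
  | succ n ih =>
    intro M _ _ P d e h1 h2 h3 h4 h5 h6
    refine ⟨P 0, _, _, e, h2 0, h1 0, h3, ?_⟩
    let r : P 1 →ₗ[R] LinearMap.ker e := (d 0).codRestrict _ (fun x => h4.apply_apply_eq_zero x)
    have hr : ∀ x, (r x : P 0) = d 0 x := fun _ => rfl
    refine ih (fun i => P (i + 1)) (fun i => d (i + 1)) r (fun i => h1 _) (fun i => h2 _)
      ?_ ?_ (fun i => h5 _) (fun i hi => h6 _ (by omega))
    · rintro ⟨x, hx⟩
      obtain ⟨y, rfl⟩ := (h4 x).1 hx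
      exact ⟨y, rfl⟩
    · intro x
      rw [← h5 0 x, ← Subtype.coe_inj, hr]
      rfl

/-- Modules of the extended resolution. -/
def consP (P₀ : ModuleCat.{v} R) (P : ℕ → ModuleCat.{v} R) : ℕ → ModuleCat.{v} R
  | 0 => P₀
  | i + 1 => P i

/-- Differentials of the extended resolution. -/
def consD (P₀ : ModuleCat.{v} R) (P : ℕ → ModuleCat.{v} R) (d₀ : P 0 →ₗ[R] P₀)
    (d : ∀ i : ℕ, P (i + 1) →ₗ[R] P i) : ∀ i : ℕ, consP P₀ P (i + 1) →ₗ[R] consP P₀ P i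
  | 0 => d₀
  | i + 1 => d i

theorem IsFPModule.cons {P M : Type v} [AddCommGroup P] [Module R P] [AddCommGroup M] [Module R M]
    (p : P →ₗ[R] M) (h1 : Module.Finite R P) (h2 : Module.Projective R P)
    (hp : Function.Surjective p) (h : IsFPModule R (LinearMap.ker p)) : IsFPModule R M := by
  obtain ⟨n, Q, d, e, g1, g2, g3, g4, g5, g6⟩ := h
  have key : ∀ x, (((LinearMap.ker p).subtype ∘ₗ e) x = 0 ↔ e x = 0) := fun x => by simp
  refine ⟨n + 1, consP (ModuleCat.of R P) Q,
    consD (ModuleCat.of R P) Q ((LinearMap.ker p).subtype ∘ₗ e) d, p, ?_, ?_, hp, ?_, ?_, ?_⟩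
  · rintro (_ | i)
    exacts [h2, g1 i]
  · rintro (_ | i)
    exacts [h1, g2 i]
  · intro x
    constructor
    · intro hx
      obtain ⟨y, hy⟩ := g3 ⟨x, hx⟩
      exact ⟨y, congrArg Subtype.val hy⟩
    · rintro ⟨y, rfl⟩
      exact (e y).2
  · rintro (_ | i)
    · intro x
      exact (key x).trans (g4 x)
    · exact g5 i
  · rintro (_ | i) hi
    · omega
    · exact g6 i (by omega)

theorem FPD.isFP {n : ℕ} {M : Type v} [AddCommGroup M] [Module R M] (h : FPD R n M) :
    IsFPModule R M := by
  induction n generalizing M with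
  | zero =>
    obtain ⟨h1, h2⟩ := h
    have hs : Subsingleton (LinearMap.ker (LinearMap.id : M →ₗ[R] M)) := by
      rw [LinearMap.ker_id]; infer_instance
    refine IsFPModule.cons (LinearMap.id : M →ₗ[R] M) h1 h2 Function.surjective_id ?_
    refine ⟨0, fun _ => ModuleCat.of R PUnit.{v+1}, fun _ => 0, 0, ?_, ?_, ?_, ?_, ?_, ?_⟩
    · intro i; change Module.Projective R PUnit.{v+1}; infer_instance
    · intro i; change Module.Finite R PUnit.{v+1}; infer_instance
    · intro x; exact ⟨0, Subsingleton.elim _ _⟩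
    · intro x; exact ⟨fun _ => ⟨0, rfl⟩, fun _ => rfl⟩
    · intro i x; exact ⟨fun _ => ⟨0, rfl⟩, fun _ => rfl⟩
    · intro i _; change Subsingleton PUnit.{v+1}; infer_instance
  | succ n ih =>
    obtain ⟨P, _, _, p, h1, h2, h3, h4⟩ := h
    exact IsFPModule.cons p h1 h2 h3 (ih h4)

theorem IsFPModule.exists_FPD {M : Type v} [AddCommGroup M] [Module R M] (h : IsFPModule R M) :
    ∃ n, FPD R n M := by
  obtain ⟨n, P, d, e, h1, h2, h3, h4, h5, h6⟩ := h
  exact ⟨n, FPD.of_res n P d e h1 h2 h3 h4 h5 h6⟩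

end aux

/-- In a short exact sequence of `R`-modules, if two of the three modules are of type `FP`,
then so is the third. -/
theorem stmt9 (R : Type u) [Ring R] (M₁ M₂ M₃ : Type v)
    [AddCommGroup M₁] [Module R M₁] [AddCommGroup M₂] [Module R M₂]
    [AddCommGroup M₃] [Module R M₃]
    (f : M₁ →ₗ[R] M₂) (g : M₂ →ₗ[R] M₃)
    (hf : Function.Injective f) (hg : Function.Surjective g) (hfg : Function.Exact f g) :
    (IsFPModule R M₁ → IsFPModule R M₂ → IsFPModule R M₃) ∧
    (IsFPModule R M₁ → IsFPModule R M₃ → IsFPModule R M₂) ∧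
    (IsFPModule R M₂ → IsFPModule R M₃ → IsFPModule R M₁) := by

  refine ⟨fun ha hb => ?_, fun ha hb => ?_, fun ha hb => ?_⟩ <;>
    obtain ⟨n, hn⟩ := ha.exists_FPD <;> obtain ⟨m, hm⟩ := hb.exists_FPD <;>
    replace hn := hn.mono (le_max_left n m) <;> replace hm := hm.mono (le_max_right n m)
  · exact (FPD.third f g hf hg hfg hn hm).isFP
  · exact (FPD.horseshoe f g hf hg hfg hn hm).isFP
  · exact (FPD.first f g hf hg hfg hn hm).isFP
end

section
/- Let F be a free group of rank k with basis x_1, …, x_k, let u ∈ F, and let D = F *_u F be the double of F along u. Then for every finite group Q, the number of group homomorphisms from D to Q equals Σ_{a ∈ Q} |u_Q^{-1}(a)|^2, where u_Q : Q^k → Q is the word map of u. -/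
/-- The relator `u(x₁,…,x_k)·u(x̄₁,…,x̄_k)⁻¹` presenting the double `F *_u F`. -/
def doubleRel {k : ℕ} (u : FreeGroup (Fin k)) : FreeGroup (Fin k ⊕ Fin k) :=
  FreeGroup.map Sum.inl u * (FreeGroup.map Sum.inr u)⁻¹

/-- The double `F *_u F` of the free group `F` of rank `k` along the word `u`. -/
def Double {k : ℕ} (u : FreeGroup (Fin k)) : Type :=
  PresentedGroup ({doubleRel u} : Set (FreeGroup (Fin k ⊕ Fin k)))

noncomputable instance {k : ℕ} (u : FreeGroup (Fin k)) : Group (Double u) := by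
  unfold Double; infer_instance

theorem double_grp_eq {k : ℕ} (u : FreeGroup (Fin k)) :
    (instGroupDouble u : Group (Double u)) =
      (inferInstance : Group (PresentedGroup ({doubleRel u} : Set (FreeGroup (Fin k ⊕ Fin k))))) :=
  rfl

theorem lift_doubleRel {k : ℕ} (u : FreeGroup (Fin k)) {Q : Type} [Group Q]
    (g : Fin k ⊕ Fin k → Q) :
    FreeGroup.lift g (doubleRel u) =
      FreeGroup.lift (g ∘ Sum.inl) u * (FreeGroup.lift (g ∘ Sum.inr) u)⁻¹ := by
  have h : ∀ s : Fin k → Fin k ⊕ Fin k,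
      FreeGroup.lift g (FreeGroup.map s u) = FreeGroup.lift (g ∘ s) u := by
    intro s
    have : (FreeGroup.lift g).comp (FreeGroup.map s) = FreeGroup.lift (g ∘ s) := by
      ext i; simp
    exact DFunLike.congr_fun this u
  simp [doubleRel, h]

noncomputable def presHomEquiv {k : ℕ} (u : FreeGroup (Fin k)) (Q : Type) [Group Q] :
    (PresentedGroup ({doubleRel u} : Set (FreeGroup (Fin k ⊕ Fin k))) →* Q) ≃
      {p : (Fin k → Q) × (Fin k → Q) // FreeGroup.lift p.1 u = FreeGroup.lift p.2 u} where
  toFun φ := ⟨(fun i => φ (PresentedGroup.of (Sum.inl i)),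
      fun i => φ (PresentedGroup.of (Sum.inr i))), by
    have h := lift_doubleRel u (fun i => φ (PresentedGroup.of i))
    have h2 : FreeGroup.lift (fun i => φ (PresentedGroup.of i)) =
        φ.comp (PresentedGroup.mk ({doubleRel u} : Set (FreeGroup (Fin k ⊕ Fin k)))) := by
      ext i; simp [PresentedGroup.of]
    rw [h2, MonoidHom.comp_apply, PresentedGroup.one_of_mem (Set.mem_singleton _), map_one] at h
    exact (mul_inv_eq_one.mp h.symm)⟩
  invFun p := PresentedGroup.toGroup (f := Sum.elim p.1.1 p.1.2) (by
    rintro r rfl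
    rw [lift_doubleRel, Sum.elim_comp_inl, Sum.elim_comp_inr, p.2, mul_inv_cancel])
  left_inv φ := by
    apply PresentedGroup.ext
    rintro (i | i) <;> simp
  right_inv p := by
    apply Subtype.ext
    apply Prod.ext <;> funext i <;> simp

def pairEquiv {X Q : Type} (w : X → Q) :
    {p : X × X // w p.1 = w p.2} ≃ Σ a : Q, {x // w x = a} × {x // w x = a} where
  toFun p := ⟨w p.1.2, ⟨p.1.1, p.2⟩, ⟨p.1.2, rfl⟩⟩
  invFun s := ⟨(s.2.1.1, s.2.2.1), s.2.1.2.trans s.2.2.2.symm⟩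
  left_inv _ := rfl
  right_inv := by
    rintro ⟨a, ⟨x, hx⟩, ⟨y, rfl⟩⟩
    rfl

/-- The number of homomorphisms from the double `F *_u F` to a finite group `Q` is
`∑_{a ∈ Q} |u_Q⁻¹(a)|²`. -/
theorem stmt10 (k : ℕ) (u : FreeGroup (Fin k)) (Q : Type) [Group Q] [Fintype Q] :
    Nat.card (Double u →* Q) =
      ∑ a : Q, (Nat.card {f : Fin k → Q // FreeGroup.lift f u = a}) ^ 2 := by
  have e : (Double u →* Q) ≃ _ :=
    (presHomEquiv u Q).trans (pairEquiv (fun f : Fin k → Q => FreeGroup.lift f u))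
  rw [Nat.card_congr e, Nat.card_sigma]
  simp only [Nat.card_prod, sq]
end
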